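/- (Main theorem.) There exist a constant c > 0 and an integer n₀ such that for every n ≥ n₀ there is a pair (A_n, B_n) of legal positions of n×n chess with the following two properties: (1) there exists a legal sequence of chess moves leading from A_n to B_n; (2) every legal sequence of chess moves leading from A_n to B_n has length at least e^{c·n}. In other words, the minimum number of legal moves required to get from A_n to B_n is exponential in n, and hence the diameter of n×n chess grows at least exponentially in n. -/

import Mathlib

/-!
`n × n` chess: the natural generalization of chess to an `n × n` board.
Pieces are kings, queens, rooks, bishops, knights and pawns of two colors,
moving and capturing exactly as in ordinary chess (rooks, bishops and queens
move any number of squares along their lines over empty squares; pawns move one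
square forward and capture one square diagonally forward); a position specifies
the placement of the pieces and the side to move; White and Black alternate
moves; a move is legal if it follows the movement rules and does not leave the
mover's own king under attack.  There is no fifty-move rule and no
draw-by-repetition rule, so games of arbitrary length are permitted.

A square is a pair `(file, rank) : Fin n × Fin n`; White pawns move towards
increasing rank, Black pawns towards decreasing rank.
-/

namespace Chess

inductive Color : Type
  | white : Color
  | black : Color
deriving DecidableEq

/-- The opposite color. -/
def Color.other : Color → Color
  | .white => .black
  | .black => .white

inductive Piece : Type
  | king | queen | rook | bishop | knight | pawn
deriving DecidableEq

/-- A square of the `n × n` board: `(file, rank)`. -/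
abbrev Sq (n : ℕ) := Fin n × Fin n

/-- A board assigns to each square either nothing or a colored piece. -/
abbrev Board (n : ℕ) := Sq n → Option (Color × Piece)

/-- A position: the placement of the pieces together with the side to move. -/
structure Position (n : ℕ) where
  board : Board n
  toMove : Color

/-- File of a square, as an integer. -/
def X {n : ℕ} (s : Sq n) : ℤ := s.1.val
/-- Rank of a square, as an integer. -/
def Y {n : ℕ} (s : Sq n) : ℤ := s.2.val

/-- `u` lies strictly between `s` and `t` on the (horizontal, vertical or
diagonal) line segment from `s` to `t`. -/
def StrictBtw {n : ℕ} (s t u : Sq n) : Prop :=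
  (X u - X s) * (Y t - Y s) = (Y u - Y s) * (X t - X s) ∧
  u ≠ s ∧ u ≠ t ∧
  min (X s) (X t) ≤ X u ∧ X u ≤ max (X s) (X t) ∧
  min (Y s) (Y t) ≤ Y u ∧ Y u ≤ max (Y s) (Y t)

/-- All squares strictly between `s` and `t` are empty. -/
def Clear {n : ℕ} (b : Board n) (s t : Sq n) : Prop :=
  ∀ u : Sq n, StrictBtw s t u → b u = none

/-- A king step: to an adjacent square. -/
def KingStep {n : ℕ} (s t : Sq n) : Prop :=
  s ≠ t ∧ |X t - X s| ≤ 1 ∧ |Y t - Y s| ≤ 1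

/-- A knight step. -/
def KnightStep {n : ℕ} (s t : Sq n) : Prop :=
  (|X t - X s| = 1 ∧ |Y t - Y s| = 2) ∨ (|X t - X s| = 2 ∧ |Y t - Y s| = 1)

/-- `s` and `t` are distinct squares of one rank or one file. -/
def RookLine {n : ℕ} (s t : Sq n) : Prop :=
  s ≠ t ∧ (X s = X t ∨ Y s = Y t)

/-- `s` and `t` are distinct squares of one diagonal. -/
def BishopLine {n : ℕ} (s t : Sq n) : Prop :=
  s ≠ t ∧ |X t - X s| = |Y t - Y s|

/-- The rank direction in which pawns of color `c` move. -/
def forward : Color → ℤ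
  | .white => 1
  | .black => -1

/-- A piece `p` of color `c` standing on `s` attacks the square `t` on the
board `b`: kings, knights and pawns by their step patterns (pawns attack one
square diagonally forward), and rooks, bishops and queens along their lines,
provided all intermediate squares are empty. -/
def AttacksFrom {n : ℕ} (b : Board n) (c : Color) (p : Piece) (s t : Sq n) : Prop :=
  match p with
  | .king => KingStep s t
  | .knight => KnightStep s t
  | .rook => RookLine s t ∧ Clear b s t
  | .bishop => BishopLine s t ∧ Clear b s t
  | .queen => (RookLine s t ∨ BishopLine s t) ∧ Clear b s t
  | .pawn => |X t - X s| = 1 ∧ Y t - Y s = forward c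

/-- The king of color `c` is attacked by some piece of the other color. -/
def InCheck {n : ℕ} (b : Board n) (c : Color) : Prop :=
  ∃ (ks s : Sq n) (p : Piece),
    b ks = some (c, Piece.king) ∧ b s = some (c.other, p) ∧
    AttacksFrom b c.other p s ks

/-- The movement rule for a piece `p` of color `c` from `s` to `t` on board
`b`: a pawn moves one square straight forward to an empty square or captures
one square diagonally forward; every other piece moves exactly along its attack
pattern. -/
def MovePattern {n : ℕ} (b : Board n) (c : Color) (p : Piece) (s t : Sq n) : Prop :=
  match p with
  | .pawn =>
      (X t = X s ∧ Y t - Y s = forward c ∧ b t = none) ∨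
      (|X t - X s| = 1 ∧ Y t - Y s = forward c ∧ ∃ q : Piece, b t = some (c.other, q))
  | _ => AttacksFrom b c p s t

/-- The board after the piece on `s` moves to `t` (capturing whatever stood
on `t`). -/
def boardAfter {n : ℕ} (b : Board n) (s t : Sq n) : Board n :=
  fun u => if u = t then b s else if u = s then none else b u

/-- `LegalMove P Q`: the position `Q` arises from the position `P` by a single
legal move: the side to move moves one of its pieces according to the movement
rules to a square not occupied by its own piece, the side to move alternates,
and the mover's own king is not left under attack. -/
def LegalMove {n : ℕ} (P Q : Position n) : Prop :=
  ∃ (s t : Sq n) (p : Piece),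
    P.board s = some (P.toMove, p) ∧
    (∀ q : Piece, P.board t ≠ some (P.toMove, q)) ∧
    MovePattern P.board P.toMove p s t ∧
    Q.board = boardAfter P.board s t ∧
    Q.toMove = P.toMove.other ∧
    ¬ InCheck Q.board P.toMove

/-- A (statically) legal position: each side has exactly one king, the side
which has just moved is not in check, and no pawn stands on the first or the
last rank. -/
def LegalPos {n : ℕ} (P : Position n) : Prop :=
  (∀ c : Color, ∃! s : Sq n, P.board s = some (c, Piece.king)) ∧
  ¬ InCheck P.board P.toMove.other ∧
  ∀ (s : Sq n) (c : Color), P.board s = some (c, Piece.pawn) →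
    (s.2 : ℕ) ≠ 0 ∧ (s.2 : ℕ) ≠ n - 1

/-- `Steps N A B`: there is a legal sequence of exactly `N` chess moves leading
from the position `A` to the position `B`. -/
def Steps {n : ℕ} : ℕ → Position n → Position n → Prop
  | 0, A, B => A = B
  | (N + 1), A, B => ∃ C : Position n, LegalMove A C ∧ Steps N C B

end Chess

/-!
The white pieces form a sliding puzzle. On a board filled with white pawns a small region is
occupied by knights, rooks and bishops, with one empty square, the hole; Black can only move the
king. A pawn move or a capture can never be undone, as it raises `progress`, so a game between two
positions of the puzzle consists of moves of white pieces into the hole and of moves of the black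
king.

The region is a row of tiles. The cells of a tile other than its core are occupied by knights, so
that the hole can travel through them freely. A hole that enters a tile in the state `lowTile` comes
out on the way back to the start and leaves `highTile`; on its next visit it restores `lowTile` and
comes out on the way to the next tile. So the tiles work like the digits of a binary counter, and
the tile `i` is only reached after `2 ^ i` rounds. For the lower bound there is a `potential`, with
weight `2 ^ i` on the tile `i`, which no move changes by more than one.
-/

namespace Chess

/-! ### Moves along lines -/

section Squares

variable {n : ℕ} {s t : Sq n}

theorem sq_ext (hX : X s = X t) (hY : Y s = Y t) : s = t :=
  Prod.ext (Fin.ext (Int.ofNat_inj.mp hX)) (Fin.ext (Int.ofNat_inj.mp hY))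

theorem X_nonneg (s : Sq n) : 0 ≤ X s := Int.natCast_nonneg _

theorem X_lt (s : Sq n) : X s < n := Int.ofNat_lt.mpr s.1.isLt

theorem Y_nonneg (s : Sq n) : 0 ≤ Y s := Int.natCast_nonneg _

theorem Y_lt (s : Sq n) : Y s < n := Int.ofNat_lt.mpr s.2.isLt

theorem exists_sq {x y : ℤ} (hx : 0 ≤ x) (hxn : x < n) (hy : 0 ≤ y) (hyn : y < n) :
    ∃ u : Sq n, X u = x ∧ Y u = y :=
  ⟨(⟨x.toNat, by omega⟩, ⟨y.toNat, by omega⟩), Int.toNat_of_nonneg hx, Int.toNat_of_nonneg hy⟩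

theorem clear_of_kingStep (b : Board n) (h : KingStep s t) : Clear b s t := by
  rintro u ⟨hcol, hus, hut, hX₁, hX₂, hY₁, hY₂⟩
  obtain ⟨-, hX, hY⟩ := h
  rw [abs_le] at hX hY
  refine absurd ?_ (not_or.mpr ⟨hus, hut⟩)
  have hXu : X u = X s ∨ X u = X t := by omega
  have hYu : Y u = Y s ∨ Y u = Y t := by omega
  suffices X u = X s ∧ Y u = Y s ∨ X u = X t ∧ Y u = Y t from
    this.imp (fun h ↦ sq_ext h.1 h.2) (fun h ↦ sq_ext h.1 h.2)
  rcases hXu with hXu | hXu <;> rcases hYu with hYu | hYu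
  · exact Or.inl ⟨hXu, hYu⟩
  · rw [hXu, hYu, sub_self, zero_mul, zero_eq_mul] at hcol
    omega
  · rw [hXu, hYu, sub_self, zero_mul, mul_eq_zero] at hcol
    omega
  · exact Or.inr ⟨hXu, hYu⟩

theorem sign_cases (z : ℤ) :
    z < 0 ∧ z.sign = -1 ∨ z = 0 ∧ z.sign = 0 ∨ 0 < z ∧ z.sign = 1 := by
  simpa [Int.sign_eq_neg_one_iff_neg, Int.sign_eq_one_iff_pos] using lt_trichotomy z 0

theorem sign_mul_eq_of_line (hline : RookLine s t ∨ BishopLine s t) :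
    (X t - X s).sign * (Y t - Y s) = (Y t - Y s).sign * (X t - X s) := by
  rcases hline with ⟨-, h | h⟩ | ⟨-, h⟩
  · simp [h]
  · simp [h]
  · rcases abs_eq_abs.mp h with h | h <;> rw [h]
    rw [Int.sign_neg]
    ring

theorem exists_strictBtw_kingStep (hline : RookLine s t ∨ BishopLine s t) (hfar : ¬ KingStep s t) :
    ∃ u, StrictBtw s t u ∧ KingStep u t ∧ (Y u = Y t → Y s = Y t) := by
  have hne : s ≠ t := hline.elim And.left And.left
  have hXY : X s ≠ X t ∨ Y s ≠ Y t := by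
    by_contra! h
    exact hne (sq_ext h.1 h.2)
  have hfar' : ¬ (|X t - X s| ≤ 1 ∧ |Y t - Y s| ≤ 1) := fun h ↦ hfar ⟨hne, h⟩
  have hdir : X t - X s = 0 ∨ Y t - Y s = 0 ∨ |X t - X s| = |Y t - Y s| := by
    rcases hline with ⟨-, h | h⟩ | ⟨-, h⟩ <;> simp [h]
  have hcol := sign_mul_eq_of_line hline
  have hsX := sign_cases (X t - X s)
  have hsY := sign_cases (Y t - Y s)
  have := X_nonneg s; have := X_nonneg t; have := Y_nonneg s; have := Y_nonneg t
  have := X_lt s; have := X_lt t; have := Y_lt s; have := Y_lt t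
  obtain ⟨u, hXu, hYu⟩ : ∃ u : Sq n,
      X u = X t - (X t - X s).sign ∧ Y u = Y t - (Y t - Y s).sign :=
    exists_sq (by omega) (by omega) (by omega) (by omega)
  simp only [abs_le] at hfar'
  rw [abs_eq_abs] at hdir
  refine ⟨u, ⟨?_, ?_, ?_, ?_, ?_, ?_, ?_⟩, ⟨?_, ?_, ?_⟩, ?_⟩
  · rw [hXu, hYu]
    linear_combination -hcol
  · rintro rfl
    omega
  · rintro rfl
    omega
  iterate 4 omega
  · rintro rfl
    omega
  iterate 2 rw [abs_le]; omega
  · omega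

end Squares

/-! ### Irreversible moves -/

section Progress

variable {n : ℕ}

/-- The contribution to `progress` of the content of a square of rank `r`. Advancing a pawn by one
rank raises it by one, and emptying a square raises it as well, as it is negative unless the square
is empty. -/
def squareProgress (n : ℕ) (r : ℤ) : Option (Color × Piece) → ℤ
  | none => 0
  | some (.white, .pawn) => r - n
  | some (.black, .pawn) => -1 - r
  | some (_, _) => -n

/-- A quantity which no legal move decreases, and which grows with every pawn move and capture. -/
def progress (b : Board n) : ℤ := ∑ s, squareProgress n (Y s) (b s)

/-- A legal move which is neither a pawn move nor a capture. -/
def QuietMove (P Q : Position n) : Prop :=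
  ∃ (s t : Sq n) (p : Piece),
    P.board s = some (P.toMove, p) ∧ p ≠ .pawn ∧ P.board t = none ∧
    AttacksFrom P.board P.toMove p s t ∧
    Q = ⟨boardAfter P.board s t, P.toMove.other⟩ ∧ ¬ InCheck Q.board P.toMove

theorem squareProgress_neg (s : Sq n) (x : Color × Piece) :
    squareProgress n (Y s) (some x) < 0 := by
  have := Y_nonneg s
  have := Y_lt s
  obtain ⟨c, p⟩ := x
  cases c <;> cases p <;> simp only [squareProgress] <;> omega

theorem squareProgress_of_ne_pawn {p : Piece} (hp : p ≠ .pawn) (c : Color) (r : ℤ) :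
    squareProgress n r (some (c, p)) = -n := by
  cases c <;> cases p <;> first | rfl | exact absurd rfl hp

theorem progress_boardAfter (b : Board n) {s t : Sq n} (h : s ≠ t) :
    progress (boardAfter b s t) = progress b - squareProgress n (Y s) (b s)
      - squareProgress n (Y t) (b t) + squareProgress n (Y t) (b s) := by
  have split (b' : Board n) : progress b' = squareProgress n (Y s) (b' s) +
      (squareProgress n (Y t) (b' t) + ∑ u ∈ ({s, t} : Finset (Sq n))ᶜ,
        squareProgress n (Y u) (b' u)) := by
    rw [progress, ← Finset.sum_add_sum_compl {s, t}, Finset.sum_pair h, add_assoc]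
  have rest : ∑ u ∈ ({s, t} : Finset (Sq n))ᶜ, squareProgress n (Y u) (boardAfter b s t u) =
      ∑ u ∈ ({s, t} : Finset (Sq n))ᶜ, squareProgress n (Y u) (b u) := by
    refine Finset.sum_congr rfl fun u hu ↦ ?_
    simp only [Finset.mem_compl, Finset.mem_insert, Finset.mem_singleton, not_or] at hu
    simp only [boardAfter, hu, if_false]
  rw [split, split b, rest]
  simp only [boardAfter, h, if_true, if_false, squareProgress]
  ring

theorem QuietMove.progress_eq {P Q : Position n} (h : QuietMove P Q) :
    progress Q.board = progress P.board := by
  obtain ⟨s, t, p, hs, hp, ht, -, rfl, -⟩ := h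
  have hst : s ≠ t := fun h ↦ by simp [← h, hs] at ht
  rw [progress_boardAfter _ hst, hs, ht]
  simp only [squareProgress_of_ne_pawn hp]
  simp only [squareProgress]
  ring

theorem QuietMove.legalMove {P Q : Position n} (h : QuietMove P Q) : LegalMove P Q := by
  obtain ⟨s, t, p, hs, hp, ht, hatt, rfl, hchk⟩ := h
  refine ⟨s, t, p, hs, by simp [ht], ?_, rfl, rfl, hchk⟩
  cases p <;> first | exact hatt | exact absurd rfl hp

theorem LegalMove.quietMove_or_progress_lt {P Q : Position n} (h : LegalMove P Q) :
    QuietMove P Q ∨ progress P.board < progress Q.board := by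
  obtain ⟨s, t, p, hs, ht, hmove, hQ, hQ', hchk⟩ := h
  have hst : s ≠ t := fun h ↦ ht p (h ▸ hs)
  have gain := progress_boardAfter P.board hst
  rw [← hQ, hs] at gain
  by_cases hp : p = .pawn
  · subst hp
    have advance : squareProgress n (Y t) (some (P.toMove, .pawn)) =
        squareProgress n (Y s) (some (P.toMove, .pawn)) + 1 := by
      have : Y t - Y s = forward P.toMove := hmove.elim (·.2.1) (·.2.1)
      cases h : P.toMove <;> simp only [squareProgress, forward, h] at this ⊢ <;> omega
    have : squareProgress n (Y t) (P.board t) ≤ 0 := by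
      cases h : P.board t with
      | none => rfl
      | some x => exact (squareProgress_neg t x).le
    right
    omega
  · rw [squareProgress_of_ne_pawn hp, squareProgress_of_ne_pawn hp] at gain
    cases h : P.board t with
    | none =>
      refine Or.inl ⟨s, t, p, hs, hp, h, ?_, ?_, hchk⟩
      · cases p <;> first | exact hmove | exact absurd rfl hp
      · cases Q
        simp_all
    | some x =>
      have := squareProgress_neg t x
      rw [h] at gain
      right
      omega

theorem LegalMove.progress_le {P Q : Position n} (h : LegalMove P Q) :
    progress P.board ≤ progress Q.board :=
  h.quietMove_or_progress_lt.elim (·.progress_eq.ge) (·.le)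

theorem Steps.progress_le {N : ℕ} {P Q : Position n} (h : Steps N P Q) :
    progress P.board ≤ progress Q.board := by
  induction N generalizing P with
  | zero => exact h ▸ le_rfl
  | succ N ih =>
    obtain ⟨C, hPC, hCQ⟩ := h
    exact hPC.progress_le.trans (ih hCQ)

theorem progress_eq_of_quiet {P Q : Position n} (h : Relation.ReflTransGen QuietMove P Q) :
    progress Q.board = progress P.board := by
  induction h with
  | refl => rfl
  | tail _ h ih => exact h.progress_eq.trans ih

theorem exists_steps_of_quiet {P Q : Position n} (h : Relation.ReflTransGen QuietMove P Q) :
    ∃ N, Steps N P Q := by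
  induction h using Relation.ReflTransGen.head_induction_on with
  | refl => exact ⟨0, rfl⟩
  | head h _ ih =>
    obtain ⟨N, hN⟩ := ih
    exact ⟨N + 1, _, h.legalMove, hN⟩

theorem Steps.exists_quietMove {N : ℕ} {P Q : Position n} (h : Steps (N + 1) P Q)
    (heq : progress Q.board = progress P.board) :
    ∃ C, QuietMove P C ∧ Steps N C Q ∧ progress Q.board = progress C.board := by
  obtain ⟨C, hPC, hCQ⟩ := h
  have hle := hCQ.progress_le
  have hquiet : QuietMove P C := hPC.quietMove_or_progress_lt.resolve_right (by omega)
  exact ⟨C, hquiet, hCQ, heq.trans hquiet.progress_eq.symm⟩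

end Progress

/-! ### Sliding puzzles -/

/-- The kinds of pieces that move around in a sliding puzzle. -/
inductive Token : Type
  | knight | rook | bishop
deriving DecidableEq

/-- The chess piece playing the role of a token. -/
def Token.toPiece : Token → Piece
  | .knight => .knight
  | .rook => .rook
  | .bishop => .bishop

/-- The shortest moves of a token between points of the integer lattice: a knight jump, or a step of
a rook or a bishop to an adjacent point. -/
def UnitStep : Token → ℕ × ℕ → ℕ × ℕ → Prop
  | .knight, p, q => p.1.dist q.1 = 1 ∧ p.2.dist q.2 = 2 ∨ p.1.dist q.1 = 2 ∧ p.2.dist q.2 = 1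
  | .rook, p, q => p.1.dist q.1 + p.2.dist q.2 = 1
  | .bishop, p, q => p.1.dist q.1 = 1 ∧ p.2.dist q.2 = 1

instance (x : Token) (p q : ℕ × ℕ) : Decidable (UnitStep x p q) := by
  cases x <;> unfold UnitStep <;> infer_instance

theorem UnitStep.symm {x : Token} {p q : ℕ × ℕ} (h : UnitStep x p q) : UnitStep x q p := by
  cases x <;> simpa only [UnitStep, Nat.dist_comm] using h

theorem UnitStep.dist_le {x : Token} {p q : ℕ × ℕ} (h : UnitStep x p q) :
    p.1.dist q.1 ≤ 2 ∧ p.2.dist q.2 ≤ 2 := by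
  cases x <;> simp only [UnitStep] at h <;> omega

theorem UnitStep.ne {x : Token} {p q : ℕ × ℕ} (h : UnitStep x p q) : p ≠ q := by
  rintro rfl
  cases x <;> simp [UnitStep] at h

/-- A state of a sliding puzzle with set of cells `C`: every cell but the hole carries a token. The
hole is also given a token, a phantom knight, so that a knight move changes the hole but not the
tokens. -/
@[ext]
structure Config (C : Type*) where
  token : C → Token
  hole : C
  token_hole : token hole = .knight

namespace Config

variable {C : Type*} [DecidableEq C] (σ : Config C) (c : C)

/-- What really stands on a cell. -/
def content : Option Token := if c = σ.hole then none else some (σ.token c)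

/-- The state after the token on `c` has moved into the hole. -/
def slide : Config C where
  token := σ.token ∘ Equiv.swap σ.hole c
  hole := c
  token_hole := by simp [σ.token_hole]

/-- `τ` arises from `σ` by moving one token into the hole, where `coord` tells how the cells are
placed in the plane. -/
def Slides (coord : C → ℕ × ℕ) (σ τ : Config C) : Prop :=
  ∃ c, UnitStep (σ.token c) (coord c) (coord σ.hole) ∧ τ = σ.slide c

variable {σ c}

theorem content_injective : Function.Injective (content (C := C)) := by
  intro σ τ h
  have hhole : σ.hole = τ.hole := by
    by_contra hne
    simpa [content, hne] using congrFun h σ.hole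
  refine Config.ext (funext fun c ↦ ?_) hhole
  by_cases hc : c = τ.hole
  · rw [hc, τ.token_hole, ← hhole, σ.token_hole]
  · simpa [content, hhole, hc] using congrFun h c

theorem slide_content (d : C) : (σ.slide c).content d =
    if d = σ.hole then σ.content c else if d = c then none else σ.content d := by
  by_cases hdc : d = c
  · subst hdc
    simp +contextual [content, slide]
  · by_cases hdh : d = σ.hole
    · subst hdh
      simp [content, slide, hdc, Ne.symm hdc]
    · simp [content, slide, hdc, hdh, Equiv.swap_apply_of_ne_of_ne]

theorem slide_of_token_eq_knight (h : σ.token c = .knight) : σ.slide c = ⟨σ.token, c, h⟩ := by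
  ext d
  · simp only [slide, Function.comp_apply, Equiv.swap_apply_def]
    split_ifs with h₁ h₂
    · rw [h, h₁, σ.token_hole]
    · rw [h₂, h, σ.token_hole]
    · rfl
  · rfl

/-- The tokens on the cells of a list can move into the hole one after the other. -/
def IsWalk (coord : C → ℕ × ℕ) : Config C → List C → Prop
  | _, [] => True
  | σ, c :: l => UnitStep (σ.token c) (coord c) (coord σ.hole) ∧ IsWalk coord (σ.slide c) l

instance decidableIsWalk (coord : C → ℕ × ℕ) :
    (σ : Config C) → (l : List C) → Decidable (IsWalk coord σ l)
  | _, [] => inferInstanceAs (Decidable True)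
  | σ, c :: l =>
    have := decidableIsWalk coord (σ.slide c) l
    inferInstanceAs (Decidable (_ ∧ _))

theorem IsWalk.reflTransGen_slides {coord : C → ℕ × ℕ} {σ : Config C} {l : List C}
    (h : IsWalk coord σ l) : Relation.ReflTransGen (Slides coord) σ (l.foldl slide σ) := by
  induction l generalizing σ with
  | nil => exact .refl
  | cons c l ih => exact .head ⟨c, h.1, rfl⟩ (ih h.2)

end Config

/-! ### Sliding puzzles on the chessboard -/

/-- A way to place a puzzle with set of cells `C` on the `n × n` board. The distance to the first
and last ranks keeps the tokens away from the kings. -/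
structure Region (C : Type*) (n : ℕ) where
  coord : C → ℕ × ℕ
  coord_injective : Function.Injective coord
  file_lt : ∀ c, (coord c).1 < n
  three_le_rank : ∀ c, 3 ≤ (coord c).2
  rank_add_five_le : ∀ c, (coord c).2 + 5 ≤ n

namespace Region

variable {C : Type*} {n : ℕ} (R : Region C n)

/-- The square of the board occupied by a cell. -/
def sq (c : C) : Sq n :=
  (⟨(R.coord c).1, R.file_lt c⟩,
    ⟨(R.coord c).2, by have := R.rank_add_five_le c; omega⟩)

theorem sq_injective : Function.Injective R.sq := by
  intro c d h
  simp only [sq, Prod.mk.injEq, Fin.mk.injEq] at h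
  exact R.coord_injective (Prod.ext h.1 h.2)

theorem eight_le (R : Region C n) (c : C) : 8 ≤ n := by
  have := R.three_le_rank c
  have := R.rank_add_five_le c
  omega

variable [DecidableEq C]

open Classical in
/-- The board displaying the state `σ`: the first rank contains the black king, on file `f`, and the
last rank is empty. All other squares outside the region are filled with white pawns, apart
from the one where the white king is locked up. -/
noncomputable def board (σ : Config C) (f : Fin n) : Board n := fun s ↦
  if s.2.val = 0 then if s.1 = f then some (.black, .king) else none
  else if s.2.val + 1 = n then none
  else if s.1.val = 0 ∧ s.2.val + 3 = n then some (.white, .king)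
  else Function.extend R.sq (fun c ↦ (σ.content c).map fun x ↦ (.white, x.toPiece))
    (fun _ ↦ some (.white, .pawn)) s

/-- The position displaying the state `σ` with player `c` to move. -/
noncomputable def position (σ : Config C) (f : Fin n) (c : Color) : Position n := ⟨R.board σ f, c⟩

variable {R} {σ τ : Config C} {f g : Fin n} {c : C} {s t : Sq n} {p : Piece}

theorem board_sq : R.board σ f (R.sq c) = (σ.content c).map fun x ↦ (.white, x.toPiece) := by
  have := R.three_le_rank c
  have := R.rank_add_five_le c
  rw [board, if_neg, if_neg, if_neg, R.sq_injective.extend_apply] <;> simp only [sq] <;> omega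

theorem board_congr_of_forall_ne (h : ∀ c, s ≠ R.sq c) : R.board σ f s = R.board τ f s := by
  have : ¬ ∃ c, R.sq c = s := fun ⟨c, hc⟩ ↦ h c hc.symm
  simp only [board, Function.extend_apply' _ _ _ this]

theorem board_eq_black : R.board σ f s = some (.black, p) ↔ s.2.val = 0 ∧ s.1 = f ∧ p = .king := by
  by_cases hs : ∃ c, R.sq c = s
  · obtain ⟨c, rfl⟩ := hs
    have := R.three_le_rank c
    rw [board_sq]
    cases σ.content c <;> simp [sq] <;> omega
  · rw [board, Function.extend_apply' _ _ _ hs]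
    split_ifs <;> simp_all [eq_comm]

theorem board_eq_white (h : R.board σ f s = some (.white, p)) : 0 < s.2.val ∧ s.2.val + 1 < n ∧
    (p = .pawn ∨ (p = .king ∧ s.1.val = 0 ∧ s.2.val + 3 = n) ∨
      ∃ c, c ≠ σ.hole ∧ s = R.sq c ∧ p = (σ.token c).toPiece) := by
  by_cases hs : ∃ c, R.sq c = s
  · obtain ⟨c, rfl⟩ := hs
    have := R.three_le_rank c
    have := R.rank_add_five_le c
    rw [board_sq, Config.content] at h
    split_ifs at h with hc
    · simp at h
    · refine ⟨?_, ?_, Or.inr (Or.inr ⟨c, hc, rfl, ?_⟩)⟩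
      · simp only [sq]; omega
      · simp only [sq]; omega
      · simpa [eq_comm] using h
  · rw [board, Function.extend_apply' _ _ _ hs] at h
    have := s.2.isLt
    split_ifs at h with h0 hf h1 hk <;> simp at h
    · exact ⟨by omega, by omega, Or.inr (Or.inl ⟨h.symm, hk⟩)⟩
    · exact ⟨by omega, by omega, Or.inl h.symm⟩

theorem board_eq_none (h : R.board σ f s = none) :
    s.2.val = 0 ∨ s.2.val + 1 = n ∨ s = R.sq σ.hole := by
  by_cases hs : ∃ c, R.sq c = s
  · obtain ⟨c, rfl⟩ := hs
    rw [board_sq, Config.content] at h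
    split_ifs at h with hc
    · exact Or.inr (Or.inr (congrArg R.sq hc))
    · simp at h
  · rw [board, Function.extend_apply' _ _ _ hs] at h
    split_ifs at h with h0 hf h1
    · exact Or.inl h0
    · exact Or.inr (Or.inl h1)

theorem board_eq_whiteKing :
    R.board σ f s = some (.white, .king) ↔ s.1.val = 0 ∧ s.2.val + 3 = n := by
  have := R.eight_le σ.hole
  constructor
  · intro h
    obtain ⟨-, -, h | ⟨-, h⟩ | ⟨c, -, -, h⟩⟩ := board_eq_white h
    · cases h
    · exact h
    · cases hc : σ.token c <;> simp [hc, Token.toPiece] at h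
  · intro h
    rw [board, if_neg (by omega), if_neg (by omega), if_pos h]

theorem position_injective {c c' : Color} (h : R.position σ f c = R.position τ g c') : σ = τ := by
  refine Config.content_injective (funext fun d ↦ ?_)
  have hd := congrFun (congrArg Position.board h) (R.sq d)
  have hinj : Function.Injective fun x : Token ↦ (Color.white, x.toPiece) := by
    intro x y hxy
    cases x <;> cases y <;> first | rfl | simp [Token.toPiece] at hxy
  exact Option.map_injective hinj (by simpa only [position, board_sq] using hd)

theorem kingStep_of_clear (hs0 : 0 < s.2.val) (hsn : s.2.val + 1 < n)
    (ht : ∀ p, R.board σ f t ≠ some (.white, p)) (hline : RookLine s t ∨ BishopLine s t)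
    (hclear : Clear (R.board σ f) s t) : KingStep s t := by
  -- Otherwise the last square before `t` is the hole, whose neighbours are occupied by White.
  by_contra hfar
  obtain ⟨u, hbtw, ⟨hne, -, hut⟩, hYu⟩ := exists_strictBtw_kingStep hline hfar
  have hu := board_eq_none (hclear u hbtw)
  obtain ⟨-, -, -, -, -, hu₁, hu₂⟩ := hbtw
  simp only [abs_le, Y] at hut hYu hu₁ hu₂
  have := t.2.isLt
  obtain rfl : u = R.sq σ.hole := by
    rcases hu with hu | hu | hu
    · omega
    · omega
    · exact hu
  have := R.three_le_rank σ.hole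
  have := R.rank_add_five_le σ.hole
  simp only [sq] at hut
  cases h : R.board σ f t with
  | none => rcases board_eq_none h with h | h | h <;> grind
  | some x =>
    obtain ⟨_ | _, p⟩ := x
    · exact ht p h
    · have := (board_eq_black.mp h).1
      omega

theorem not_inCheck (σ : Config C) (f : Fin n) (c : Color) : ¬ InCheck (R.board σ f) c := by
  rintro ⟨k, s, p, hk, hs, hatt⟩
  have := R.eight_le σ.hole
  cases c with
  | white =>
    obtain ⟨hs0, -, rfl⟩ := board_eq_black.mp hs
    have := hatt.2.2
    rw [abs_le] at this
    have hk3 := (board_eq_whiteKing.mp hk).2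
    simp only [Y] at this
    omega
  | black =>
    have hk0 := (board_eq_black.mp hk).1
    obtain ⟨hs0, hsn, rfl | ⟨rfl, -, hs3⟩ | ⟨c, -, rfl, rfl⟩⟩ := board_eq_white hs
    · have := hatt.2
      simp only [Color.other, forward, Y] at this
      omega
    · have := hatt.2.2
      rw [abs_le] at this
      simp only [Y] at this
      omega
    · have hc := R.three_le_rank c
      have hline (h : RookLine (R.sq c) k ∨ BishopLine (R.sq c) k)
          (hclear : Clear (R.board σ f) (R.sq c) k) : False := by
        have := (kingStep_of_clear hs0 hsn (by simp [hk]) h hclear).2.2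
        rw [abs_le] at this
        simp only [Y, sq] at this
        omega
      cases hx : σ.token c <;> simp only [hx, Token.toPiece, AttacksFrom] at hatt
      · have : |Y k - Y (R.sq c)| ≤ 2 := by
          rcases hatt with h | h <;> omega
        rw [abs_le] at this
        simp only [Y, sq] at this
        omega
      · exact hline (Or.inl hatt.1) hatt.2
      · exact hline (Or.inr hatt.1) hatt.2

theorem legalPos (σ : Config C) (f : Fin n) (c : Color) : LegalPos (R.position σ f c) := by
  have := R.eight_le σ.hole
  refine ⟨fun c' ↦ ?_, not_inCheck σ f _, fun s c' hs ↦ ?_⟩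
  · cases c' with
    | white =>
      refine ⟨(⟨0, by omega⟩, ⟨n - 3, by omega⟩),
        board_eq_whiteKing.mpr ⟨rfl, Nat.sub_add_cancel (by omega)⟩, fun s hs ↦ ?_⟩
      obtain ⟨hs0, hs3⟩ := board_eq_whiteKing.mp hs
      exact Prod.ext (Fin.ext hs0) (Fin.ext (Nat.eq_sub_of_add_eq hs3))
    | black =>
      refine ⟨(f, ⟨0, by omega⟩), ?_, fun s hs ↦ ?_⟩
      · simp [position, board]
      obtain ⟨hs0, hsf, -⟩ := board_eq_black.mp hs
      exact Prod.ext hsf (Fin.ext hs0)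
  · cases c' with
    | white =>
      obtain ⟨h0, hn, -⟩ := board_eq_white hs
      omega
    | black => simpa using (board_eq_black.mp hs).2.2

end Region

theorem abs_sub_eq_dist (a b : ℕ) : |(b : ℤ) - a| = Nat.dist a b := by
  rw [Nat.dist, Nat.cast_add]
  rcases abs_cases ((b : ℤ) - a) with ⟨h, h'⟩ | ⟨h, h'⟩ <;> omega

theorem unitStep_iff {n : ℕ} (b : Board n) (c : Color) {x : Token} {s t : Sq n} :
    UnitStep x (s.1, s.2) (t.1, t.2) ↔
      AttacksFrom b c x.toPiece s t ∧ (x ≠ .knight → KingStep s t) := by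
  have hX : |X t - X s| = Nat.dist s.1 t.1 := abs_sub_eq_dist _ _
  have hY : |Y t - Y s| = Nat.dist s.2 t.2 := abs_sub_eq_dist _ _
  have hX0 : X s = X t ↔ Nat.dist s.1 t.1 = 0 := by simp [X, Nat.dist]; omega
  have hY0 : Y s = Y t ↔ Nat.dist s.2 t.2 = 0 := by simp [Y, Nat.dist]; omega
  have hne : s ≠ t ↔ ¬ (X s = X t ∧ Y s = Y t) :=
    not_congr ⟨fun h ↦ h ▸ ⟨rfl, rfl⟩, fun h ↦ sq_ext h.1 h.2⟩
  have clear : KingStep s t → Clear b s t := clear_of_kingStep b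
  simp only [KingStep, hne, hX, hY, hX0, hY0] at clear ⊢
  cases x <;> simp only [UnitStep, AttacksFrom, Token.toPiece, KnightStep, RookLine, BishopLine,
    hne, hX, hY, hX0, hY0]
  · simp
    omega
  · constructor
    · exact fun h ↦ ⟨⟨by omega, clear (by omega)⟩, fun _ ↦ by omega⟩
    · rintro ⟨⟨h, -⟩, h'⟩
      have := h' (by simp)
      omega
  · constructor
    · exact fun h ↦ ⟨⟨by omega, clear (by omega)⟩, fun _ ↦ by omega⟩
    · rintro ⟨⟨h, -⟩, h'⟩
      have := h' (by simp)
      omega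

namespace Region

variable {C : Type*} [DecidableEq C] {n : ℕ} {R : Region C n} {σ τ : Config C} {f g : Fin n} {c : C}

theorem boardAfter_slide :
    boardAfter (R.board σ f) (R.sq c) (R.sq σ.hole) = R.board (σ.slide c) f := by
  funext u
  by_cases hu : ∃ d, u = R.sq d
  · obtain ⟨d, rfl⟩ := hu
    simp only [boardAfter, board_sq, Config.slide_content, R.sq_injective.eq_iff]
    split_ifs <;> rfl
  · push Not at hu
    simp only [boardAfter, hu, if_false]
    exact board_congr_of_forall_ne hu

theorem boardAfter_blackKing {s t : Sq n} (hs : s.2.val = 0) (ht : t.2.val = 0) :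
    boardAfter (R.board σ s.1) s t = R.board σ t.1 := by
  funext u
  have eq_iff {v : Sq n} (hv : v.2.val = 0) : u = v ↔ u.2.val = 0 ∧ u.1 = v.1 := by
    rw [Prod.ext_iff, Fin.ext_iff (a := u.2), hv, and_comm]
  by_cases hu : u.2.val = 0
  · by_cases h : u.1 = t.1 <;> by_cases h' : u.1 = s.1 <;>
      simp [boardAfter, board, eq_iff hs, eq_iff ht, hu, h, h', hs]
  · simp [boardAfter, board, eq_iff hs, eq_iff ht, hu]

theorem quietMove_slide (f : Fin n)
    (h : UnitStep (σ.token c) (R.coord c) (R.coord σ.hole)) :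
    QuietMove (R.position σ f .white) (R.position (σ.slide c) f .black) := by
  have hc : c ≠ σ.hole := fun hc ↦ h.ne (congrArg _ hc)
  refine ⟨R.sq c, R.sq σ.hole, (σ.token c).toPiece, ?_, ?_, ?_,
    ((unitStep_iff (s := R.sq c) (t := R.sq σ.hole) _ _).mp h).1, ?_, not_inCheck _ _ _⟩
  · simp [position, board_sq, Config.content, hc]
  · cases σ.token c <;> simp [Token.toPiece]
  · simp [position, board_sq, Config.content]
  · exact congrArg₂ Position.mk boardAfter_slide.symm rfl

theorem quietMove_blackKing (σ : Config C) (h : Nat.dist f g = 1) :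
    QuietMove (R.position σ f .black) (R.position σ g .white) := by
  have hn := R.eight_le σ.hole
  have hfg : f ≠ g := by
    rintro rfl
    simp at h
  let s : Sq n := (f, ⟨0, by omega⟩)
  let t : Sq n := (g, ⟨0, by omega⟩)
  refine ⟨s, t, .king, by simp [position, board, s], by simp, ?_, ⟨?_, ?_, ?_⟩, ?_,
    not_inCheck _ _ _⟩
  · simp [position, board, t, hfg.symm]
  · simp [s, t, hfg]
  · rw [X, X, abs_sub_eq_dist, h, Nat.cast_one]
  · simp [Y, s, t]
  · exact congrArg₂ Position.mk (boardAfter_blackKing (s := s) (t := t) rfl rfl).symm rfl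

theorem slides_of_quietMove {Q : Position n} (h : QuietMove (R.position σ f .white) Q) :
    ∃ τ, Config.Slides R.coord σ τ ∧ Q = R.position τ f .black := by
  obtain ⟨s, t, p, hs, hp, ht, hatt, rfl, -⟩ := h
  have ht' : ∀ q, R.board σ f t ≠ some (.white, q) := fun q h ↦ by
    rw [position] at ht; simp [h] at ht
  obtain ⟨hs0, hsn, hp' | ⟨rfl, -, hs3⟩ | ⟨c, -, rfl, rfl⟩⟩ := board_eq_white hs
  · exact absurd hp' hp
  · have hrank := hatt.2.2
    simp only [abs_le, Y] at hrank
    have := R.three_le_rank σ.hole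
    have := R.rank_add_five_le σ.hole
    rcases board_eq_none ht with h | h | rfl
    · omega
    · omega
    · simp only [sq] at hrank
      omega
  · have hstep : UnitStep (σ.token c) (R.coord c) (t.1, t.2) := by
      refine (unitStep_iff (s := R.sq c) _ _).mpr ⟨hatt, fun hx ↦ ?_⟩
      cases h : σ.token c <;> simp only [h, Token.toPiece, AttacksFrom] at hatt hx
      · exact absurd rfl hx
      · exact kingStep_of_clear hs0 hsn ht' (Or.inl hatt.1) hatt.2
      · exact kingStep_of_clear hs0 hsn ht' (Or.inr hatt.1) hatt.2
    obtain rfl : t = R.sq σ.hole := by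
      have := hstep.dist_le.2
      have := R.three_le_rank c
      have := R.rank_add_five_le c
      unfold Nat.dist at *
      rcases board_eq_none ht with h | h | h
      · omega
      · omega
      · exact h
    exact ⟨σ.slide c, ⟨c, hstep, rfl⟩, congrArg₂ Position.mk boardAfter_slide rfl⟩

theorem exists_blackKing_of_quietMove {Q : Position n}
    (h : QuietMove (R.position σ f .black) Q) : ∃ g, Q = R.position σ g .white := by
  obtain ⟨s, t, p, hs, -, ht, hatt, rfl, -⟩ := h
  obtain ⟨hs0, rfl, rfl⟩ := board_eq_black.mp hs
  have hrank := hatt.2.2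
  simp only [abs_le, Y] at hrank
  have ht0 : t.2.val = 0 := by
    have := R.three_le_rank σ.hole
    have := R.rank_add_five_le σ.hole
    rcases board_eq_none ht with h | h | rfl
    · exact h
    · omega
    · simp only [sq] at hrank
      omega
  exact ⟨t.1, congrArg₂ Position.mk (boardAfter_blackKing hs0 ht0) rfl⟩

theorem reflGen_slides_of_quietMove {c : Color} {Q : Position n}
    (h : QuietMove (R.position σ f c) Q) :
    ∃ τ g, Relation.ReflGen (Config.Slides R.coord) σ τ ∧ Q = R.position τ g c.other := by
  cases c with
  | white =>
    obtain ⟨τ, hτ, rfl⟩ := slides_of_quietMove h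
    exact ⟨τ, f, .single hτ, rfl⟩
  | black =>
    obtain ⟨g, rfl⟩ := exists_blackKing_of_quietMove h
    exact ⟨σ, g, .refl, rfl⟩

theorem reflTransGen_quietMove (f : Fin n)
    (h : Relation.ReflTransGen (Config.Slides R.coord) σ τ) :
    ∃ g, Relation.ReflTransGen QuietMove (R.position σ f .white) (R.position τ g .white) := by
  induction h with
  | refl => exact ⟨f, .refl⟩
  | @tail σ' τ _ hslide ih =>
    obtain ⟨g, hg⟩ := ih
    obtain ⟨c, hc, rfl⟩ := hslide
    have := R.eight_le c
    obtain ⟨g', hg'⟩ : ∃ g' : Fin n, Nat.dist g g' = 1 := by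
      unfold Nat.dist
      by_cases h0 : g.val = 0
      · exact ⟨⟨1, by omega⟩, by simp; omega⟩
      · exact ⟨⟨g - 1, by omega⟩, by simp; omega⟩
    exact ⟨g', (hg.tail (quietMove_slide g hc)).tail (quietMove_blackKing _ hg')⟩

variable {Inv : Config C → Prop} {Φ : Config C → ℤ}

theorem abs_potential_sub_le_of_steps
    (hΦ : ∀ σ τ, Inv σ → Config.Slides R.coord σ τ → Inv τ ∧ |Φ τ - Φ σ| ≤ 1) {N : ℕ} {c : Color}
    {Q : Position n} (hσ : Inv σ) (hsteps : Steps N (R.position σ f c) Q)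
    (hprogress : progress Q.board = progress (R.position σ f c).board) :
    ∃ τ g c', Q = R.position τ g c' ∧ |Φ τ - Φ σ| ≤ N := by
  induction N generalizing σ f c with
  | zero => exact ⟨σ, f, c, hsteps.symm, by simp⟩
  | succ N ih =>
    obtain ⟨_, hquiet, hsteps, hprogress⟩ := hsteps.exists_quietMove hprogress
    obtain ⟨σ', f', hslide, rfl⟩ := reflGen_slides_of_quietMove hquiet
    have hσ' : Inv σ' ∧ |Φ σ' - Φ σ| ≤ 1 := by
      cases hslide with
      | refl => exact ⟨hσ, by simp⟩
      | single h => exact hΦ σ σ' hσ h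
    obtain ⟨τ, g, c', hQ, hτ⟩ := ih hσ'.1 hsteps hprogress
    refine ⟨τ, g, c', hQ, ?_⟩
    calc |Φ τ - Φ σ| ≤ |Φ τ - Φ σ'| + |Φ σ' - Φ σ| := abs_sub_le _ _ _
      _ ≤ ↑(N + 1) := by push_cast; exact add_le_add hτ hσ'.2

theorem exists_legalPos_forall_steps
    (hΦ : ∀ σ τ, Inv σ → Config.Slides R.coord σ τ → Inv τ ∧ |Φ τ - Φ σ| ≤ 1) (hσ : Inv σ)
    (hreach : Relation.ReflTransGen (Config.Slides R.coord) σ τ) :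
    ∃ A B : Position n, LegalPos A ∧ LegalPos B ∧ (∃ N, Steps N A B) ∧
      ∀ N, Steps N A B → |Φ τ - Φ σ| ≤ N := by
  have hn := R.eight_le σ.hole
  obtain ⟨g, hquiet⟩ := reflTransGen_quietMove (R := R) ⟨0, by omega⟩ hreach
  refine ⟨_, _, legalPos _ _ _, legalPos _ _ _, exists_steps_of_quiet hquiet, fun N hN ↦ ?_⟩
  obtain ⟨τ', g', c', hτ', hle⟩ :=
    abs_potential_sub_le_of_steps hΦ hσ hN (progress_eq_of_quiet hquiet)
  rwa [position_injective hτ']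

end Region

/-! ### A tile of the counter -/

/-- The placement of the cells of a tile. Cells `0` to `4` form the core; the others are the
corridors through which the hole gets there. The hole enters at `2` and leaves at `16` or `18`. -/
def tileCoord : Fin 22 → ℕ × ℕ :=
  ![(6, 10), (5, 9), (5, 10), (6, 9), (6, 11),
    (3, 11), (2, 9), (3, 7), (4, 5), (5, 7),
    (8, 9), (7, 7),
    (4, 12),
    (8, 11), (9, 9), (10, 7), (11, 9),
    (6, 7), (5, 5), (7, 4), (9, 3), (11, 4)]

/-- The tile with bishops on `a` and `b`, a rook on `r` and knights on all other cells. -/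
def arrangement (a b r : Fin 22) : Fin 22 → Token := fun k ↦
  if k = a ∨ k = b then .bishop else if k = r then .rook else .knight

/-- The positions of the two bishops and the rook that can occur. All of them are in the core, and
the two bishops stay on squares of opposite colors. -/
def Admissible (a b r : Fin 22) : Prop := a ≤ 1 ∧ 2 ≤ b ∧ b ≤ 4 ∧ r ≤ 4 ∧ r ≠ a ∧ r ≠ b

instance (a b r : Fin 22) : Decidable (Admissible a b r) := by
  unfold Admissible
  infer_instance

/-- The states of a tile that can occur. -/
def IsArrangement (w : Fin 22 → Token) : Prop := ∃ a b r, Admissible a b r ∧ w = arrangement a b r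

/-- The contribution of the tokens of a tile to the potential, in units of the scale of the tile. -/
def weight (w : Fin 22 → Token) : ℤ :=
  (if w 0 = .knight then 0 else 1) + (if w 1 = .knight then 1 else 0) +
    (if w 4 = .knight ∨ w 3 = .bishop then 1 else 0)

/-- The contribution of the hole to the potential if it is on the cell `k` of a tile, in the same
units. It is defined so as to make up for the change of `weight` under slides within the tile. -/
def offset (w : Fin 22 → Token) (k : Fin 22) : ℤ :=
  if k = 2 then 1
  else if k = 1 ∨ 17 ≤ k then 0
  else if k = 0 ∨ 13 ≤ k then 2
  else if k = 4 ∨ k = 12 then if w 2 = .knight then 1 else 0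
  else if (k = 10 ∨ k = 11) ∧ w 3 ≠ .knight then 2
  else if w 2 = .knight ∨ w 4 = .knight then 1
  else 2

theorem arrangement_comp_swap (a b r k l : Fin 22) : arrangement a b r ∘ Equiv.swap k l =
    arrangement (Equiv.swap k l a) (Equiv.swap k l b) (Equiv.swap k l r) := by
  have swap_eq_iff (x y : Fin 22) : Equiv.swap k l x = y ↔ x = Equiv.swap k l y := by
    rw [← Equiv.symm_apply_eq, Equiv.symm_swap, eq_comm]
  funext x
  simp only [arrangement, Function.comp_apply, swap_eq_iff]

theorem admissible_swap_and_weight_add_offset : ∀ a b r, Admissible a b r → ∀ k,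
    arrangement a b r k = .knight → ∀ l,
    UnitStep (arrangement a b r l) (tileCoord l) (tileCoord k) →
    let s := Equiv.swap k l
    Admissible (s a) (s b) (s r) ∧
      weight (arrangement (s a) (s b) (s r)) + offset (arrangement (s a) (s b) (s r)) l =
        weight (arrangement a b r) + offset (arrangement a b r) k := by
  decide +kernel

theorem IsArrangement.eq_knight {w : Fin 22 → Token} (hw : IsArrangement w) {k : Fin 22}
    (hk : 5 ≤ k) : w k = .knight := by
  obtain ⟨a, b, r, h, rfl⟩ := hw
  unfold Admissible at h
  rw [arrangement, if_neg (by omega), if_neg (by omega)]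

theorem IsArrangement.slide_and_weight_add_offset {ρ : Config (Fin 22)}
    (hρ : IsArrangement ρ.token) {l : Fin 22}
    (hl : UnitStep (ρ.token l) (tileCoord l) (tileCoord ρ.hole)) :
    IsArrangement (ρ.slide l).token ∧
      weight (ρ.slide l).token + offset (ρ.slide l).token l =
        weight ρ.token + offset ρ.token ρ.hole := by
  obtain ⟨w, k, hk⟩ := ρ
  obtain ⟨a, b, r, hadm, rfl⟩ := hρ
  obtain ⟨hadm', heq⟩ := admissible_swap_and_weight_add_offset a b r hadm k hk l hl
  simp only [Config.slide, arrangement_comp_swap]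
  exact ⟨⟨_, _, _, hadm', rfl⟩, heq⟩

/-- The state of a tile coding the digit `0`, with the hole at the entrance. -/
def lowTile : Config (Fin 22) := ⟨arrangement 1 3 4, 2, by decide⟩

/-- The state of a tile coding the digit `1`, with the hole at the entrance. -/
def highTile : Config (Fin 22) := ⟨arrangement 0 4 3, 2, by decide⟩

theorem reflTransGen_slides_lowTile :
    Relation.ReflTransGen (Config.Slides tileCoord) lowTile ⟨highTile.token, 18, by decide⟩ := by
  have walk : lowTile.IsWalk tileCoord [3, 11, 10, 0, 4, 2, 5, 6, 7, 8, 9, 3, 0, 1, 17, 18] := by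
    decide +kernel
  convert walk.reflTransGen_slides using 1
  exact Config.ext (by decide +kernel) rfl

theorem reflTransGen_slides_highTile :
    Relation.ReflTransGen (Config.Slides tileCoord) highTile ⟨lowTile.token, 16, by decide⟩ := by
  have walk : highTile.IsWalk tileCoord [4, 1, 0, 3, 2, 12, 4, 0, 13, 14, 15, 16] := by
    decide +kernel
  convert walk.reflTransGen_slides using 1
  exact Config.ext (by decide +kernel) rfl

theorem isArrangement_lowTile : IsArrangement lowTile.token := ⟨1, 3, 4, by decide, rfl⟩

theorem isArrangement_highTile : IsArrangement highTile.token := ⟨0, 4, 3, by decide, rfl⟩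

/-! ### The row of tiles -/

/-- The cells of the strip: a row of `m` tiles, preceded by four cells where the hole turns
round. -/
inductive Cell (m : ℕ) : Type
  | turn (k : Fin 4)
  | tile (i : Fin m) (k : Fin 22)
deriving DecidableEq

/-- The placement of the cells where the hole turns round. -/
def turnCoord : Fin 4 → ℕ × ℕ := ![(3, 4), (1, 5), (2, 7), (3, 9)]

namespace Cell

variable {m : ℕ}

/-- The placement of the cells of the strip. Consecutive tiles are eight files apart, which is
less than the width of a tile. -/
def coord : Cell m → ℕ × ℕ
  | turn k => turnCoord k
  | tile i k => (8 * i + (tileCoord k).1, (tileCoord k).2)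

theorem coord_injective : Function.Injective (coord (m := m)) := by
  have turn_inj : ∀ k l, turnCoord k = turnCoord l → k = l := by decide
  have turn_ne : ∀ k l, (turnCoord k).2 = (tileCoord l).2 →
      (turnCoord k).1 ≠ (tileCoord l).1 ∧ (turnCoord k).1 < 8 + (tileCoord l).1 := by decide
  have tile_inj : ∀ k l, (tileCoord k).2 = (tileCoord l).2 →
      (tileCoord k).1 % 8 = (tileCoord l).1 % 8 → k = l := by decide
  rintro (k | ⟨i, k⟩) (l | ⟨j, l⟩) h <;> simp only [coord, Prod.ext_iff] at h
  · rw [turn_inj k l (Prod.ext h.1 h.2)]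
  · have := turn_ne k l h.2
    omega
  · have := turn_ne l k h.2.symm
    omega
  · obtain rfl := tile_inj k l h.2 (by omega)
    obtain rfl : i = j := by omega
    rfl

theorem unitStep_coord_tile {x : Token} {i : Fin m} {k l : Fin 22} :
    UnitStep x (tile i k).coord (tile i l).coord ↔ UnitStep x (tileCoord k) (tileCoord l) := by
  cases x <;> simp only [UnitStep, coord, Nat.dist_add_add_left]

theorem unitStep_coord_turn_tile {x : Token} {k : Fin 4} {j : Fin m} (hj : j.val = 0)
    {l : Fin 22} : UnitStep x (turn (m := m) k).coord (tile j l).coord ↔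
      UnitStep x (turnCoord k) (tileCoord l) := by
  simp only [coord, hj, mul_zero, zero_add]

theorem unitStep_coord_tile_succ {x : Token} {i j : Fin m} (hj : j.val = i + 1) {k l : Fin 22} :
    UnitStep x (tile i k).coord (tile j l).coord ↔
      UnitStep x (tileCoord k) (8 + (tileCoord l).1, (tileCoord l).2) := by
  cases x <;> simp only [UnitStep, coord, hj, mul_add_one, add_assoc, Nat.dist_add_add_left]

/-- The strip, placed on the chessboard. -/
def region {n : ℕ} (hm : 8 * m + 4 ≤ n) (hn : 17 ≤ n) : Region (Cell m) n where
  coord := coord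
  coord_injective := coord_injective
  file_lt := by
    have turn_lt : ∀ k, (turnCoord k).1 < 4 := by decide
    have tile_lt : ∀ k, (tileCoord k).1 < 12 := by decide
    rintro (k | ⟨i, k⟩)
    · exact (turn_lt k).trans_le (by omega)
    · have := tile_lt k
      simp only [coord]
      omega
  three_le_rank := by
    have turn_le : ∀ k, 3 ≤ (turnCoord k).2 := by decide
    have tile_le : ∀ k, 3 ≤ (tileCoord k).2 := by decide
    rintro (k | ⟨-, k⟩)
    · exact turn_le k
    · exact tile_le k
  rank_add_five_le := by
    have turn_le : ∀ k, (turnCoord k).2 ≤ 12 := by decide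
    have tile_le : ∀ k, (tileCoord k).2 ≤ 12 := by decide
    rintro (k | ⟨-, k⟩)
    · exact (Nat.add_le_add_right (turn_le k) 5).trans hn
    · exact (Nat.add_le_add_right (tile_le k) 5).trans hn

end Cell

open Cell

variable {m : ℕ} {T : Fin m → Fin 22 → Token}

/-- The tokens on the strip, given those on each tile. -/
def stripToken (T : Fin m → Fin 22 → Token) : Cell m → Token
  | turn _ => .knight
  | tile i k => T i k

/-- The states of the strip that can occur. -/
def IsStrip (σ : Config (Cell m)) : Prop :=
  ∃ T, (∀ i, IsArrangement (T i)) ∧ σ.token = stripToken T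

/-- The contribution of the hole to the potential, if it is on the given cell. -/
def holeValue (t : Cell m → Token) : Cell m → ℤ
  | turn _ => 0
  | tile i k => 2 ^ i.val * offset (t ∘ tile i) k

/-- The binary counter displayed by the tiles, refined so that a single slide changes it by at most
one. -/
def potential (σ : Config (Cell m)) : ℤ :=
  ∑ i, 2 ^ i.val * weight (σ.token ∘ tile i) + holeValue σ.token σ.hole

/-- The state of the strip where the tile `i` is in the state `ρ` and the others are as in `T`. -/
def embed (T : Fin m → Fin 22 → Token) (i : Fin m) (ρ : Config (Fin 22)) : Config (Cell m) where
  token := stripToken (Function.update T i ρ.token)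
  hole := tile i ρ.hole
  token_hole := by simp [stripToken, ρ.token_hole]

theorem embed_slide (i : Fin m) (ρ : Config (Fin 22)) (l : Fin 22) :
    (embed T i ρ).slide (tile i l) = embed T i (ρ.slide l) := by
  refine Config.ext (funext fun c ↦ ?_) rfl
  simp only [Config.slide, embed, Function.comp_apply]
  cases c with
  | turn k => rw [Equiv.swap_apply_of_ne_of_ne] <;> simp [stripToken]
  | tile j k =>
    by_cases hj : j = i
    · subst hj
      have hinj : Function.Injective (tile j) := fun _ _ h ↦ (tile.inj h).2
      rw [hinj.swap_apply]
      simp [stripToken]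
    · rw [Equiv.swap_apply_of_ne_of_ne] <;> simp [stripToken, hj]

theorem potential_embed (i : Fin m) (ρ : Config (Fin 22)) : potential (embed T i ρ) =
    ∑ j ∈ Finset.univ.erase i, 2 ^ j.val * weight (T j) +
      2 ^ i.val * (weight ρ.token + offset ρ.token ρ.hole) := by
  have token_comp_tile (j : Fin m) :
      (embed T i ρ).token ∘ tile j = Function.update T i ρ.token j := rfl
  have rest : ∑ j ∈ Finset.univ.erase i, 2 ^ j.val * weight (Function.update T i ρ.token j) =
      ∑ j ∈ Finset.univ.erase i, 2 ^ j.val * weight (T j) :=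
    Finset.sum_congr rfl fun j hj ↦ by rw [Function.update_of_ne (Finset.ne_of_mem_erase hj)]
  have hole : holeValue (embed T i ρ).token (embed T i ρ).hole =
      2 ^ i.val * offset ρ.token ρ.hole := by
    change 2 ^ i.val * offset ((embed T i ρ).token ∘ tile i) ρ.hole = _
    rw [token_comp_tile, Function.update_self]
  simp only [potential, token_comp_tile, hole]
  rw [← Finset.sum_erase_add _ _ (Finset.mem_univ i), rest, Function.update_self]
  ring

theorem isArrangement_update (hT : ∀ j, IsArrangement (T j)) {w : Fin 22 → Token}
    (hw : IsArrangement w) (i j : Fin m) : IsArrangement (Function.update T i w j) := by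
  by_cases hj : j = i
  · subst hj
    simpa using hw
  · simpa [hj] using hT j

theorem isStrip_slide_embed_and_potential_eq (hT : ∀ j, IsArrangement (T j)) {i : Fin m}
    {ρ : Config (Fin 22)} {l : Fin 22} (hρ : IsArrangement ρ.token)
    (hl : UnitStep (ρ.token l) (tileCoord l) (tileCoord ρ.hole)) :
    IsStrip ((embed T i ρ).slide (tile i l)) ∧
      potential ((embed T i ρ).slide (tile i l)) = potential (embed T i ρ) := by
  obtain ⟨hslide, heq⟩ := hρ.slide_and_weight_add_offset hl
  rw [embed_slide, potential_embed, potential_embed, ← heq]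
  exact ⟨⟨_, isArrangement_update hT hslide i, rfl⟩, rfl⟩

theorem unitStep_turn_tile : ∀ x k l, UnitStep x (turnCoord k) (tileCoord l) →
    (x = .knight → (k, l) = (3, 2) ∨ (k, l) = (0, 18)) ∧ (x ≠ .knight → 5 ≤ l) := by
  rintro (_ | _ | _) <;> decide +kernel

theorem unitStep_tile_tile : ∀ x k l,
    UnitStep x (tileCoord k) (8 + (tileCoord l).1, (tileCoord l).2) →
    (x = .knight → (k, l) = (16, 2) ∨ (k, l) = (21, 18)) ∧ (x ≠ .knight → 5 ≤ k ∧ 5 ≤ l) := by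
  rintro (_ | _ | _) <;> decide +kernel

theorem eq_knight_and_abs_holeValue_sub_le_of_turn_tile (hT : ∀ i, IsArrangement (T i)) {x : Token}
    {k : Fin 4} {j : Fin m} {l : Fin 22} (h : UnitStep x (turn (m := m) k).coord (tile j l).coord)
    (hx : x = stripToken T (turn k) ∨ x = stripToken T (tile j l)) :
    x = .knight ∧
      |holeValue (stripToken T) (turn k) - holeValue (stripToken T) (tile j l)| ≤ 1 := by
  have hj : j.val = 0 := by
    have turn_lt : ∀ k, (turnCoord k).1 < 4 := by decide
    have le_tile : ∀ l, 2 ≤ (tileCoord l).1 := by decide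
    have := h.dist_le.1
    have := turn_lt k
    have := le_tile l
    simp only [coord, Nat.dist] at *
    omega
  obtain ⟨hknight, hother⟩ := unitStep_turn_tile x k l ((unitStep_coord_turn_tile hj).mp h)
  obtain rfl : x = .knight := by
    by_contra hne
    exact hne (hx.elim id (·.trans ((hT j).eq_knight (hother hne))))
  refine ⟨rfl, ?_⟩
  rcases hknight rfl with h | h <;> simp only [Prod.mk.injEq] at h <;> obtain ⟨rfl, rfl⟩ := h <;>
    simp [holeValue, offset, hj]

theorem eq_knight_and_abs_holeValue_sub_le_of_tile_tile (hT : ∀ i, IsArrangement (T i)) {x : Token}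
    {i j : Fin m} (hij : i < j) {k l : Fin 22} (h : UnitStep x (tile i k).coord (tile j l).coord)
    (hx : x = stripToken T (tile i k) ∨ x = stripToken T (tile j l)) :
    x = .knight ∧
      |holeValue (stripToken T) (tile i k) - holeValue (stripToken T) (tile j l)| ≤ 1 := by
  have hj : j.val = i + 1 := by
    have tile_le : ∀ k, (tileCoord k).1 ≤ 11 := by decide
    have le_tile : ∀ l, 2 ≤ (tileCoord l).1 := by decide
    have := h.dist_le.1
    have := tile_le k
    have := le_tile l
    simp only [coord, Nat.dist] at *
    omega
  obtain ⟨hknight, hother⟩ := unitStep_tile_tile x k l ((unitStep_coord_tile_succ hj).mp h)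
  obtain rfl : x = .knight := by
    by_contra hne
    obtain ⟨hk, hl⟩ := hother hne
    exact hne (hx.elim (·.trans ((hT i).eq_knight hk)) (·.trans ((hT j).eq_knight hl)))
  refine ⟨rfl, ?_⟩
  rcases hknight rfl with h | h <;> simp only [Prod.mk.injEq] at h <;> obtain ⟨rfl, rfl⟩ := h <;>
    simp [holeValue, offset, hj, pow_succ]

theorem eq_knight_and_abs_holeValue_sub_le (hT : ∀ i, IsArrangement (T i)) {c d : Cell m}
    (h : UnitStep (stripToken T c) c.coord d.coord)
    (hcd : ∀ i k l, c = tile i k → d ≠ tile i l) :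
    stripToken T c = .knight ∧ |holeValue (stripToken T) c - holeValue (stripToken T) d| ≤ 1 := by
  rcases c with k | ⟨i, k⟩ <;> rcases d with l | ⟨j, l⟩
  · exact ⟨rfl, by simp [holeValue]⟩
  · exact eq_knight_and_abs_holeValue_sub_le_of_turn_tile hT h (Or.inl rfl)
  · rw [abs_sub_comm]
    exact eq_knight_and_abs_holeValue_sub_le_of_turn_tile hT h.symm (Or.inr rfl)
  · rcases lt_trichotomy i j with hij | rfl | hji
    · exact eq_knight_and_abs_holeValue_sub_le_of_tile_tile hT hij h (Or.inl rfl)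
    · exact absurd rfl (hcd i k l rfl)
    · rw [abs_sub_comm]
      exact eq_knight_and_abs_holeValue_sub_le_of_tile_tile hT hji h.symm (Or.inr rfl)

theorem isStrip_and_abs_potential_sub_le (σ τ : Config (Cell m)) (hσ : IsStrip σ)
    (h : Config.Slides coord σ τ) : IsStrip τ ∧ |potential τ - potential σ| ≤ 1 := by
  obtain ⟨T, hT, hσT⟩ := hσ
  obtain ⟨t, d, hd⟩ := σ
  obtain rfl : t = stripToken T := hσT
  obtain ⟨c, hc, rfl⟩ := h
  dsimp only at hc
  by_cases hcd : ∀ i k l, c = tile i k → d ≠ tile i l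
  · obtain ⟨hknight, hle⟩ := eq_knight_and_abs_holeValue_sub_le hT hc hcd
    rw [Config.slide_of_token_eq_knight hknight]
    exact ⟨⟨T, hT, rfl⟩, by simpa only [potential, add_sub_add_left_eq_sub] using hle⟩
  · push Not at hcd
    obtain ⟨i, l, k, rfl, rfl⟩ := hcd
    have heq : (⟨stripToken T, tile i k, hd⟩ : Config (Cell m)) = embed T i ⟨T i, k, hd⟩ :=
      Config.ext (by simp [embed]) rfl
    obtain ⟨hstrip, hpot⟩ := isStrip_slide_embed_and_potential_eq hT (ρ := ⟨T i, k, hd⟩) (hT i)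
      (unitStep_coord_tile.mp hc)
    rw [heq]
    exact ⟨hstrip, by simp [hpot]⟩

/-! ### Counting -/

/-- The hole can be brought from `c₁` to `c₂`, turning the tokens `T₁` on the tiles into `T₂`. -/
def Reaches (T₁ : Fin m → Fin 22 → Token) (c₁ : Cell m) (T₂ : Fin m → Fin 22 → Token)
    (c₂ : Cell m) : Prop :=
  ∃ h₁ h₂,
    Relation.ReflTransGen (Config.Slides coord) ⟨stripToken T₁, c₁, h₁⟩ ⟨stripToken T₂, c₂, h₂⟩

namespace Reaches

variable {T₁ T₂ T₃ : Fin m → Fin 22 → Token} {c₁ c₂ c₃ : Cell m}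

theorem trans (h : Reaches T₁ c₁ T₂ c₂) (h' : Reaches T₂ c₂ T₃ c₃) : Reaches T₁ c₁ T₃ c₃ :=
  have ⟨h₁, _, h₁₂⟩ := h
  have ⟨_, h₃, h₂₃⟩ := h'
  ⟨h₁, h₃, h₁₂.trans h₂₃⟩

theorem of_knight (h₁ : stripToken T c₁ = .knight) (h₂ : stripToken T c₂ = .knight)
    (hstep : UnitStep .knight c₂.coord c₁.coord) : Reaches T c₁ T c₂ :=
  ⟨h₁, h₂, .single ⟨c₂, by simpa only [h₂] using hstep,
    (Config.slide_of_token_eq_knight (σ := ⟨stripToken T, c₁, h₁⟩) h₂).symm⟩⟩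

theorem of_tile {i : Fin m} {ρ ρ' : Config (Fin 22)} (hT : T i = ρ.token)
    (h : Relation.ReflTransGen (Config.Slides tileCoord) ρ ρ') :
    Reaches T (tile i ρ.hole) (Function.update T i ρ'.token) (tile i ρ'.hole) := by
  have hlift : Relation.ReflTransGen (Config.Slides coord) (embed T i ρ) (embed T i ρ') := by
    refine h.lift (embed T i) ?_
    rintro ρ _ ⟨l, hl, rfl⟩
    exact ⟨tile i l, unitStep_coord_tile.mpr (by simpa [embed, stripToken] using hl),
      (embed_slide i ρ l).symm⟩
  refine ⟨by simp [stripToken, hT, ρ.token_hole], by simp [stripToken, ρ'.token_hole], ?_⟩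
  simpa only [embed, ← hT, Function.update_eq_self] using hlift

end Reaches

theorem reaches_turn_zero (hT : ∀ i, IsArrangement (T i)) (i : ℕ) (hi : i < m) :
    Reaches T (tile ⟨i, hi⟩ 18) T (turn 0) := by
  induction i with
  | zero =>
    exact .of_knight ((hT _).eq_knight (by decide)) rfl
      ((unitStep_coord_turn_tile rfl).mpr (by decide))
  | succ i ih =>
    have hi' : i < m := by omega
    have knight (j : Fin m) {k : Fin 22} (hk : 5 ≤ k) : stripToken T (tile j k) = .knight :=
      (hT j).eq_knight hk
    have enter : Reaches T (tile ⟨i + 1, hi⟩ 18) T (tile ⟨i, hi'⟩ 21) :=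
      .of_knight (knight _ (by decide)) (knight _ (by decide))
        ((unitStep_coord_tile_succ rfl).mpr (by decide))
    have hop {k : Fin 22} (l : Fin 22) (hk : 5 ≤ k) (hl : 5 ≤ l)
        (h : UnitStep .knight (tileCoord l) (tileCoord k)) :
        Reaches T (tile ⟨i, hi'⟩ k) T (tile ⟨i, hi'⟩ l) :=
      .of_knight (knight _ hk) (knight _ hl) (unitStep_coord_tile.mpr h)
    have cross : Reaches T (tile ⟨i, hi'⟩ 21) T (tile ⟨i, hi'⟩ 18) :=
      ((hop 20 (by decide) (by decide) (by decide)).trans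
        (hop 19 (by decide) (by decide) (by decide))).trans
        (hop 18 (by decide) (by decide) (by decide))
    exact (enter.trans cross).trans (ih hi')

theorem reaches_tile_zero (hm : 0 < m) (h : T ⟨0, hm⟩ 2 = .knight) :
    Reaches T (turn 0) T (tile ⟨0, hm⟩ 2) := by
  have hop {k : Fin 4} (l : Fin 4) (h : UnitStep .knight (turnCoord l) (turnCoord k)) :
      Reaches T (turn k) T (turn l) := .of_knight rfl rfl h
  have enter : Reaches T (turn 3) T (tile ⟨0, hm⟩ 2) :=
    .of_knight rfl h ((unitStep_coord_turn_tile rfl).mpr (by decide)).symm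
  exact (((hop 1 (by decide)).trans (hop 2 (by decide))).trans (hop 3 (by decide))).trans enter

theorem reaches_tile (hT : ∀ j, IsArrangement (T j)) (i : ℕ) (hi : i < m)
    (hentrance : T ⟨i, hi⟩ 2 = .knight) (hlow : ∀ j : Fin m, j.val < i → T j = lowTile.token) :
    Reaches T (turn 0) T (tile ⟨i, hi⟩ 2) := by
  induction i generalizing T with
  | zero => exact reaches_tile_zero hi hentrance
  | succ i ih =>
    have hi' : i < m := by omega
    have hTi : T ⟨i, hi'⟩ = lowTile.token := hlow _ (Nat.lt_succ_self i)
    let T' := Function.update T ⟨i, hi'⟩ highTile.token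
    have hTi' : T' ⟨i, hi'⟩ = highTile.token := Function.update_self ..
    have hT' : ∀ j, IsArrangement (T' j) := isArrangement_update hT isArrangement_highTile _
    have hlow' (j : Fin m) (hj : j.val < i) : T' j = lowTile.token :=
      (Function.update_of_ne (Fin.ne_of_val_ne hj.ne) ..).trans (hlow j (by omega))
    have first_visit : Reaches T (turn 0) T (tile ⟨i, hi'⟩ 2) :=
      ih hT hi' (by rw [hTi]; decide) fun j hj ↦ hlow j (by omega)
    have switch_high : Reaches T (tile ⟨i, hi'⟩ 2) T' (tile ⟨i, hi'⟩ 18) :=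
      .of_tile hTi reflTransGen_slides_lowTile
    have return_to_start : Reaches T' (tile ⟨i, hi'⟩ 18) T' (turn 0) := reaches_turn_zero hT' i hi'
    have second_visit : Reaches T' (turn 0) T' (tile ⟨i, hi'⟩ 2) :=
      ih hT' hi' (by rw [hTi']; decide) hlow'
    have switch_low : Reaches T' (tile ⟨i, hi'⟩ 2) T (tile ⟨i, hi'⟩ 16) := by
      have h : Reaches T' (tile ⟨i, hi'⟩ 2) (Function.update T' ⟨i, hi'⟩ lowTile.token)
          (tile ⟨i, hi'⟩ 16) := .of_tile hTi' reflTransGen_slides_highTile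
      rwa [Function.update_idem, ← hTi, Function.update_eq_self] at h
    have enter_next : Reaches T (tile ⟨i, hi'⟩ 16) T (tile ⟨i + 1, hi⟩ 2) :=
      .of_knight ((hT _).eq_knight (by decide)) hentrance
        ((unitStep_coord_tile_succ rfl).mpr (by decide)).symm
    exact ((((first_visit.trans switch_high).trans return_to_start).trans second_visit).trans
      switch_low).trans enter_next

theorem exists_reflTransGen_slides_potential (m : ℕ) : ∃ σ τ : Config (Cell (m + 1)),
    IsStrip σ ∧ Relation.ReflTransGen (Config.Slides coord) σ τ ∧
      potential τ - potential σ = 2 ^ m := by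
  have harr (_ : Fin (m + 1)) : IsArrangement lowTile.token := isArrangement_lowTile
  obtain ⟨h, h', hreach⟩ := reaches_tile harr m (Nat.lt_succ_self m) (by decide) fun _ _ ↦ rfl
  refine ⟨_, _, ⟨_, harr, rfl⟩, hreach, ?_⟩
  simp [potential, holeValue, offset]

theorem exists_legalPos_two_pow_le {m n : ℕ} (hm : 8 * m + 12 ≤ n) (hn : 17 ≤ n) :
    ∃ A B : Position n, LegalPos A ∧ LegalPos B ∧ (∃ N, Steps N A B) ∧
      ∀ N, Steps N A B → 2 ^ m ≤ N := by
  obtain ⟨σ, τ, hσ, hreach, hpot⟩ := exists_reflTransGen_slides_potential m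
  let R : Region (Cell (m + 1)) n := region (by omega) hn
  obtain ⟨A, B, hA, hB, hAB, hle⟩ :=
    R.exists_legalPos_forall_steps isStrip_and_abs_potential_sub_le hσ hreach
  refine ⟨A, B, hA, hB, hAB, fun N hN ↦ ?_⟩
  have h := (le_abs_self _).trans (hle N hN)
  rw [hpot] at h
  exact_mod_cast h

end Chess

open Chess in
/-- Main theorem.  There are a constant `c > 0` and an
integer `n₀` such that for every `n ≥ n₀` there is a pair `(A, B)` of legal
positions of `n × n` chess such that some legal sequence of chess moves leads
from `A` to `B`, while every legal sequence of chess moves leading from `A` to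
`B` has length at least `e^{c n}`.  Hence the minimum number of legal moves
required to get from `A` to `B` — and with it the diameter of `n × n` chess —
grows at least exponentially in `n`. -/
theorem statement11 :
    ∃ c : ℝ, 0 < c ∧ ∃ n₀ : ℕ, ∀ n : ℕ, n₀ ≤ n →
      ∃ A B : Position n, LegalPos A ∧ LegalPos B ∧
        (∃ N : ℕ, Steps N A B) ∧
        (∀ N : ℕ, Steps N A B → Real.exp (c * n) ≤ (N : ℝ)) := by
  refine ⟨Real.log 2 / 32, by positivity, 24, fun n hn ↦ ?_⟩
  obtain ⟨A, B, hA, hB, hAB, hle⟩ :=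
    exists_legalPos_two_pow_le (m := n / 16) (n := n) (by omega) (by omega)
  refine ⟨A, B, hA, hB, hAB, fun N hN ↦ ?_⟩
  have hdiv : (n : ℝ) ≤ 32 * ↑(n / 16) := by
    exact_mod_cast (by omega : n ≤ 32 * (n / 16))
  calc Real.exp (Real.log 2 / 32 * n)
      ≤ Real.exp (↑(n / 16) * Real.log 2) := by
        rw [Real.exp_le_exp]
        linear_combination Real.log 2 / 32 * hdiv
    _ = 2 ^ (n / 16) := by rw [Real.exp_nat_mul, Real.exp_log two_pos]
    _ ≤ N := mod_cast hle N hN
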